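/- For u ∈ H^{ℓ+1}(𝕊¹) with ℓ ≥ 1, the commutator u ∂ₓ^{ℓ+1}u - ∂ₓ^ℓ(u ∂ₓu) satisfies ‖u ∂ₓ^{ℓ+1}u - ∂ₓ^ℓ(u ∂ₓu)‖_{L²(𝕊¹)} ≤ C(ℓ) ‖∂ₓu‖_{L^∞(𝕊¹)} ‖∂ₓ^ℓ u‖_{L²(𝕊¹)}. -/

import Mathlib

open Real MeasureTheory

/-! By the Leibniz rule the commutator is a combination of products `∂ⁱv · ∂ʲv` with `v = ∂u` and
`i + j = m := ℓ - 1`, so by Hölder it suffices to interpolate `a_k := ‖∂ᵏv‖_{L^{2m/k}}` between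
`a_0 = ‖v‖_∞` and `a_m = ‖∂ᵐv‖₂`. Integrating `∫ |f'|ᵖ = ∫ f' · |f'|^{p-2} f'` by parts on the
circle gives `‖f'‖_p² ≤ (p - 1) ‖f‖_{p₀} ‖f''‖_{p₂}` whenever `1/p₀ + 1/p₂ = 2/p`; hence
`a_{k+1}² ≤ 2m a_k a_{k+2}`. So `a` is log-convex up to a constant, and `a_i a_j ≤ C a_0 a_{i+j}`.
-/

open scoped ENNReal

section LogConvex

variable {R : Type*} [CommSemiring R] [LinearOrder R] [IsStrictOrderedRing R]
  {K : R} {a : ℕ → R} {m : ℕ}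

theorem succ_mul_le_pow_mul_of_sq_le (hK : 0 ≤ K) (ha : ∀ i, 0 ≤ a i)
    (h : ∀ i, i + 2 ≤ m → a (i + 1) ^ 2 ≤ K * (a i * a (i + 2))) (i d : ℕ) (hm : i + d + 1 ≤ m) :
    a (i + 1) * a (i + d) ≤ K ^ d * (a i * a (i + d + 1)) := by
  induction d with
  | zero => simp [mul_comm]
  | succ d ih =>
    rcases (ha (i + d + 1)).eq_or_lt with h0 | hpos
    · simp only [← add_assoc, ← h0, mul_zero]
      have := ha i
      have := ha (i + d + 1 + 1)
      positivity
    refine le_of_mul_le_mul_right ?_ hpos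
    calc a (i + 1) * a (i + d + 1) * a (i + d + 1)
        = a (i + 1) * a (i + d + 1) ^ 2 := by ring
      _ ≤ a (i + 1) * (K * (a (i + d) * a (i + d + 2))) :=
          mul_le_mul_of_nonneg_left (h (i + d) (by lia)) (ha _)
      _ = K * a (i + d + 2) * (a (i + 1) * a (i + d)) := by ring
      _ ≤ K * a (i + d + 2) * (K ^ d * (a i * a (i + d + 1))) :=
          mul_le_mul_of_nonneg_left (ih (by lia)) (mul_nonneg hK (ha _))
      _ = K ^ (d + 1) * (a i * a (i + (d + 1) + 1)) * a (i + d + 1) := by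
          rw [← add_assoc i d 1]; ring

theorem mul_le_pow_mul_zero_mul_of_sq_le (hK : 0 ≤ K) (ha : ∀ i, 0 ≤ a i)
    (h : ∀ i, i + 2 ≤ m → a (i + 1) ^ 2 ≤ K * (a i * a (i + 2))) {i j : ℕ} (hm : i + j ≤ m) :
    a i * a j ≤ K ^ (i * j) * (a 0 * a (i + j)) := by
  wlog hij : i ≤ j generalizing i j
  · simpa only [mul_comm, add_comm] using this (i := j) (j := i) (by lia) (by lia)
  induction i generalizing j with
  | zero => simp
  | succ i ih =>
    obtain ⟨d, rfl⟩ : ∃ d, j = i + d := ⟨j - i, by lia⟩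
    calc a (i + 1) * a (i + d) ≤ K ^ d * (a i * a (i + d + 1)) :=
          succ_mul_le_pow_mul_of_sq_le hK ha h i d (by lia)
      _ ≤ K ^ d * (K ^ (i * (i + d + 1)) * (a 0 * a (i + (i + d + 1)))) :=
          mul_le_mul_of_nonneg_left (ih (by lia) (by lia)) (by positivity)
      _ = K ^ ((i + 1) * (i + d)) * (a 0 * a (i + 1 + (i + d))) := by
          rw [show i + (i + d + 1) = i + 1 + (i + d) by ring]; ring

end LogConvex

section LpNorm

theorem holderTriple_div_div {c : ℝ≥0∞} (hc₀ : c ≠ 0) (hc : c ≠ ∞) (x y : ℝ≥0∞) :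
    ENNReal.HolderTriple (c / x) (c / y) (c / (x + y)) where
  inv_add_inv_eq_inv := by
    rw [ENNReal.inv_div (.inr hc) (.inr hc₀), ENNReal.inv_div (.inr hc) (.inr hc₀),
      ENNReal.inv_div (.inr hc) (.inr hc₀), ENNReal.add_div]

variable {α E : Type*} [MeasurableSpace α] {μ : Measure α} {p q r : ℝ≥0∞}

variable [NormedAddCommGroup E] {f : α → E}

theorem lpNorm_smul_le_mul_lpNorm {𝕜 : Type*} [NormedRing 𝕜] [MulActionWithZero 𝕜 E]
    [IsBoundedSMul 𝕜 E] {φ : α → 𝕜} (hφ : MemLp φ p μ) (hf : MemLp f q μ)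
    [ENNReal.HolderTriple p q r] :
    lpNorm (φ • f) r μ ≤ lpNorm φ p μ * lpNorm f q μ := by
  rw [← toReal_eLpNorm (hφ.1.smul hf.1), ← toReal_eLpNorm hφ.1, ← toReal_eLpNorm hf.1,
    ← ENNReal.toReal_mul]
  exact ENNReal.toReal_mono (ENNReal.mul_ne_top hφ.eLpNorm_ne_top hf.eLpNorm_ne_top)
    (eLpNorm_smul_le_mul_eLpNorm hf.1 hφ.1)

theorem lpNorm_norm_rpow (hf : AEStronglyMeasurable f μ) {s : ℝ} (hs : 0 < s) :
    lpNorm (fun x => ‖f x‖ ^ s) p μ = lpNorm f (p * ENNReal.ofReal s) μ ^ s := by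
  have hfs : AEStronglyMeasurable (fun x => ‖f x‖ ^ s) μ :=
    (hf.norm.aemeasurable.pow_const s).aestronglyMeasurable
  rw [← toReal_eLpNorm hfs, ← toReal_eLpNorm hf, eLpNorm_norm_rpow f hs, ENNReal.toReal_rpow]

theorem integral_norm_rpow_eq_lpNorm_rpow (hf : AEStronglyMeasurable f μ) {s : ℝ} (hs : 0 < s) :
    ∫ x, ‖f x‖ ^ s ∂μ = lpNorm f (ENNReal.ofReal s) μ ^ s := by
  have hfs : AEStronglyMeasurable (fun x => ‖f x‖ ^ s) μ :=
    (hf.norm.aemeasurable.pow_const s).aestronglyMeasurable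
  rw [← one_mul (ENNReal.ofReal s), ← lpNorm_norm_rpow hf hs, lpNorm_one_eq_integral_norm hfs]
  exact integral_congr_ae (.of_forall fun x => (Real.norm_of_nonneg (by positivity)).symm)

theorem abs_integral_mul_norm_rpow_le {q s t : ℝ} {g : α → ℝ} (hs : 0 < s)
    (hqt : q.HolderConjugate (t / s)) (hg : MemLp g (ENNReal.ofReal q) μ)
    (hf : MemLp f (ENNReal.ofReal t) μ) :
    |∫ x, g x * ‖f x‖ ^ s ∂μ| ≤
      lpNorm g (ENNReal.ofReal q) μ * lpNorm f (ENNReal.ofReal t) μ ^ s := by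
  have hmul : ENNReal.ofReal (t / s) * ENNReal.ofReal s = ENNReal.ofReal t := by
    rw [← ENNReal.ofReal_mul hqt.symm.nonneg, div_mul_cancel₀ _ hs.ne']
  have hpow : MemLp (fun x => ‖f x‖ ^ s) (ENNReal.ofReal (t / s)) μ := by
    refine ⟨(hf.1.norm.aemeasurable.pow_const s).aestronglyMeasurable, ?_⟩
    rw [eLpNorm_norm_rpow f hs, hmul]
    exact ENNReal.rpow_lt_top_of_nonneg hs.le hf.eLpNorm_ne_top
  have hconj : ENNReal.HolderTriple (ENNReal.ofReal q) (ENNReal.ofReal (t / s)) 1 := by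
    simpa using hqt.ennrealOfReal
  calc |∫ x, g x * ‖f x‖ ^ s ∂μ|
      ≤ ∫ x, ‖g x * ‖f x‖ ^ s‖ ∂μ := by
        simpa only [Real.norm_eq_abs] using
          norm_integral_le_integral_norm (μ := μ) fun x => g x * ‖f x‖ ^ s
    _ = lpNorm (g • fun x => ‖f x‖ ^ s) 1 μ :=
        (lpNorm_one_eq_integral_norm (hg.1.smul hpow.1)).symm
    _ ≤ lpNorm g (ENNReal.ofReal q) μ * lpNorm (fun x => ‖f x‖ ^ s) (ENNReal.ofReal (t / s)) μ :=
        lpNorm_smul_le_mul_lpNorm hg hpow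
    _ = lpNorm g (ENNReal.ofReal q) μ * lpNorm f (ENNReal.ofReal t) μ ^ s := by
        rw [lpNorm_norm_rpow hf.1 hs, hmul]

theorem lpNorm_top_le_of_ae_bound {M : ℝ} (hM : 0 ≤ M) (h : ∀ᵐ x ∂μ, ‖f x‖ ≤ M) :
    lpNorm f ∞ μ ≤ M := by
  by_cases hf : AEStronglyMeasurable f μ
  · rw [← toReal_eLpNorm hf]
    exact ENNReal.toReal_le_of_le_ofReal hM (eLpNormEssSup_le_of_ae_bound h)
  · simpa [hf] using hM

theorem lpNorm_two_eq_sqrt_integral_sq {f : α → ℝ} (hf : AEStronglyMeasurable f μ) :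
    lpNorm f 2 μ = √(∫ x, f x ^ 2 ∂μ) := by
  rw [lpNorm_eq_integral_norm_rpow_toReal two_ne_zero ENNReal.ofNat_ne_top hf,
    Real.sqrt_eq_rpow]
  simp

theorem memLp_restrict_Ioc_of_continuous {f : ℝ → E} (hf : Continuous f) (a b : ℝ) (p : ℝ≥0∞) :
    MemLp f p (volume.restrict (Set.Ioc a b)) := by
  obtain ⟨C, hC⟩ := isCompact_Icc.exists_bound_of_continuousOn (s := Set.Icc a b) hf.continuousOn
  refine .of_bound hf.aestronglyMeasurable C ?_
  filter_upwards [ae_restrict_mem measurableSet_Ioc] with x hx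
  exact hC x (Set.Ioc_subset_Icc_self hx)

end LpNorm

theorem hasDerivAt_abs_rpow_mul_self {s : ℝ} (hs : 0 ≤ s) (x : ℝ) :
    HasDerivAt (fun y : ℝ => |y| ^ s * y) ((s + 1) * |x| ^ s) x := by
  have hcont : Continuous fun y : ℝ => |y| ^ s := continuous_abs.rpow_const fun _ => .inr hs
  refine hasDerivAt_of_hasDerivAt_of_ne' (x := 0) (g := fun x => (s + 1) * |x| ^ s)
    (fun y hy => ?_) (hcont.mul continuous_id).continuousAt
    (hcont.const_mul _).continuousAt x
  have hderiv := ((hasDerivAt_abs hy).rpow_const (p := s) (.inl (abs_ne_zero.mpr hy))).mul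
    (hasDerivAt_id y)
  refine hderiv.congr_deriv ?_
  calc SignType.sign y * s * |y| ^ (s - 1) * y + |y| ^ s * 1
      = s * (|y| ^ (s - 1) * (SignType.sign y * y)) + |y| ^ s := by ring
    _ = s * |y| ^ s + |y| ^ s := by
        rw [sign_mul_self, ← Real.rpow_add_one (abs_ne_zero.mpr hy), sub_add_cancel]
    _ = (s + 1) * |y| ^ s := by ring

theorem mul_abs_rpow_sub_two_mul_self {p : ℝ} (hp : p ≠ 0) (x : ℝ) :
    x * (|x| ^ (p - 2) * x) = |x| ^ p := by
  rcases eq_or_ne x 0 with rfl | hx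
  · simp [Real.zero_rpow hp]
  · rw [mul_left_comm, ← sq, ← sq_abs, ← Real.rpow_add_natCast (abs_ne_zero.mpr hx)]
    norm_num

theorem sq_le_of_rpow_le_mul_rpow_sub_two {x c p : ℝ} (hx : 0 ≤ x) (hc : 0 ≤ c)
    (h : x ^ p ≤ c * x ^ (p - 2)) : x ^ 2 ≤ c := by
  rcases hx.eq_or_lt with rfl | hpos
  · simpa using hc
  · refine le_of_mul_le_mul_right (h.trans' (le_of_eq ?_)) (Real.rpow_pos_of_pos hpos (p - 2))
    rw [← Real.rpow_natCast, ← Real.rpow_add hpos]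
    norm_num

section Interpolation

variable {a b p : ℝ} {f f' f'' : ℝ → ℝ}

theorem integral_abs_deriv_rpow_eq (hp : 2 ≤ p) (hf : ∀ x, HasDerivAt f (f' x) x)
    (hf' : ∀ x, HasDerivAt f' (f'' x) x) (hf'' : Continuous f'') (hb : f b = f a)
    (hb' : f' b = f' a) :
    ∫ x in a..b, |f' x| ^ p = -(p - 1) * ∫ x in a..b, f x * f'' x * |f' x| ^ (p - 2) := by
  have hcf' : Continuous f' := continuous_iff_continuousAt.mpr fun x => (hf' x).continuousAt
  have hcpow : Continuous fun x => |f' x| ^ (p - 2) :=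
    hcf'.abs.rpow_const fun _ => .inr (by linarith)
  have hv (x : ℝ) : HasDerivAt (fun y => |f' y| ^ (p - 2) * f' y)
      ((p - 1) * (|f' x| ^ (p - 2) * f'' x)) x :=
    ((hasDerivAt_abs_rpow_mul_self (by linarith : 0 ≤ p - 2) (f' x)).comp x (hf' x)).congr_deriv
      (by ring)
  have hibp := intervalIntegral.integral_mul_deriv_eq_deriv_mul (a := a) (b := b)
    (fun x _ => hf x) (fun x _ => hv x) (hcf'.intervalIntegrable _ _)
    (Continuous.intervalIntegrable (by fun_prop) _ _)
  simp only [hb, hb', sub_self, zero_sub,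
    mul_abs_rpow_sub_two_mul_self (by linarith : p ≠ 0)] at hibp
  rw [neg_mul, ← intervalIntegral.integral_const_mul, ← neg_eq_iff_eq_neg, ← hibp]
  exact intervalIntegral.integral_congr fun x _ => by ring

theorem lpNorm_deriv_sq_le {p₀ p₂ : ℝ≥0∞} (hp : 2 < p)
    [ENNReal.HolderTriple p₀ p₂ (ENNReal.ofReal (p / 2))] (hab : a ≤ b)
    (hf : ∀ x, HasDerivAt f (f' x) x) (hf' : ∀ x, HasDerivAt f' (f'' x) x)
    (hf'' : Continuous f'') (hb : f b = f a) (hb' : f' b = f' a) :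
    lpNorm f' (ENNReal.ofReal p) (volume.restrict (Set.Ioc a b)) ^ 2 ≤
      (p - 1) * (lpNorm f p₀ (volume.restrict (Set.Ioc a b)) *
        lpNorm f'' p₂ (volume.restrict (Set.Ioc a b))) := by
  set μ : Measure ℝ := volume.restrict (Set.Ioc a b)
  have hcf : Continuous f := continuous_iff_continuousAt.mpr fun x => (hf x).continuousAt
  have hcf' : Continuous f' := continuous_iff_continuousAt.mpr fun x => (hf' x).continuousAt
  have hN : 0 ≤ lpNorm f' (ENNReal.ofReal p) μ := lpNorm_nonneg
  have hconj : (p / 2).HolderConjugate (p / (p - 2)) :=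
    Real.holderConjugate_iff.mpr ⟨by linarith, by field [(by linarith : p - 2 ≠ 0)]⟩
  have hmain : lpNorm f' (ENNReal.ofReal p) μ ^ p ≤ (p - 1) *
      (lpNorm f p₀ μ * lpNorm f'' p₂ μ) * lpNorm f' (ENNReal.ofReal p) μ ^ (p - 2) := by
    have hp1 : 0 ≤ p - 1 := by linarith
    calc lpNorm f' (ENNReal.ofReal p) μ ^ p = ∫ x in a..b, |f' x| ^ p := by
          rw [intervalIntegral.integral_of_le hab,
            ← integral_norm_rpow_eq_lpNorm_rpow hcf'.aestronglyMeasurable (by linarith)]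
          rfl
      _ = (p - 1) * -∫ x, (f • f'') x * ‖f' x‖ ^ (p - 2) ∂μ := by
          rw [integral_abs_deriv_rpow_eq hp.le hf hf' hf'' hb hb',
            intervalIntegral.integral_of_le hab, neg_mul, mul_neg]
          rfl
      _ ≤ (p - 1) * (lpNorm (f • f'') (ENNReal.ofReal (p / 2)) μ *
            lpNorm f' (ENNReal.ofReal p) μ ^ (p - 2)) := by
          gcongr
          exact (neg_le_abs _).trans <| abs_integral_mul_norm_rpow_le (by linarith) hconj
            (memLp_restrict_Ioc_of_continuous (hcf.smul hf'') a b _)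
            (memLp_restrict_Ioc_of_continuous hcf' a b _)
      _ ≤ (p - 1) * (lpNorm f p₀ μ * lpNorm f'' p₂ μ *
            lpNorm f' (ENNReal.ofReal p) μ ^ (p - 2)) := by
          gcongr
          exact lpNorm_smul_le_mul_lpNorm (memLp_restrict_Ioc_of_continuous hcf a b _)
            (memLp_restrict_Ioc_of_continuous hf'' a b _)
      _ = _ := by ring
  exact sq_le_of_rpow_le_mul_rpow_sub_two hN (mul_nonneg (by linarith)
    (mul_nonneg lpNorm_nonneg lpNorm_nonneg)) hmain

-- The exponent `2 * m / i` is `∞` for `i = 0`.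
theorem lpNorm_iteratedDeriv_succ_sq_le {m i : ℕ} (hi : i + 2 ≤ m) (hab : a ≤ b)
    (hf : ContDiff ℝ m f) (hper : ∀ k < m, iteratedDeriv k f b = iteratedDeriv k f a) :
    lpNorm (iteratedDeriv (i + 1) f) (2 * m / (i + 1 : ℕ)) (volume.restrict (Set.Ioc a b)) ^ 2 ≤
      2 * m * (lpNorm (iteratedDeriv i f) (2 * m / i) (volume.restrict (Set.Ioc a b)) *
        lpNorm (iteratedDeriv (i + 2) f) (2 * m / (i + 2 : ℕ))
          (volume.restrict (Set.Ioc a b))) := by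
  have hm : (i : ℝ) + 2 ≤ m := mod_cast hi
  have hderiv {k : ℕ} (hk : k < m) (x : ℝ) :
      HasDerivAt (iteratedDeriv k f) (iteratedDeriv (k + 1) f x) x := by
    rw [iteratedDeriv_succ]
    exact (hf.differentiable_iteratedDeriv k (mod_cast hk) x).hasDerivAt
  have hp : (2 : ℝ) < 2 * m / (i + 1 : ℕ) := by
    rw [lt_div_iff₀ (by positivity)]
    push_cast
    linarith
  have hexp : (2 * m / (i + 1 : ℕ) : ℝ≥0∞) = ENNReal.ofReal (2 * m / (i + 1 : ℕ)) := by
    rw [ENNReal.ofReal_div_of_pos (by positivity), ENNReal.ofReal_mul (by positivity)]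
    simp only [ENNReal.ofReal_natCast, ENNReal.ofReal_ofNat]
  have hholder : ENNReal.HolderTriple (2 * m / i) (2 * m / (i + 2 : ℕ))
      (ENNReal.ofReal (2 * m / (i + 1 : ℕ) / 2)) := by
    have h2m : (2 * m : ℝ≥0∞) ≠ 0 := mul_ne_zero two_ne_zero (Nat.cast_ne_zero.mpr (by lia))
    convert holderTriple_div_div h2m (by finiteness) i (i + 2 : ℕ)
    rw [ENNReal.ofReal_div_of_pos two_pos, ← hexp, ENNReal.ofReal_ofNat, div_eq_mul_inv,
      div_eq_mul_inv, mul_assoc, ← ENNReal.mul_inv (.inr (by finiteness)) (.inr two_ne_zero),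
      ← div_eq_mul_inv]
    push_cast
    ring_nf
  rw [hexp]
  refine (lpNorm_deriv_sq_le (p₀ := 2 * m / i) (p₂ := 2 * m / (i + 2 : ℕ)) hp hab
    (hderiv (by lia)) (hderiv (by lia))
    (hf.continuous_iteratedDeriv _ (mod_cast hi)) (hper _ (by lia)) (hper _ (by lia))).trans ?_
  gcongr
  · exact mul_nonneg lpNorm_nonneg lpNorm_nonneg
  · calc (2 * m / (i + 1 : ℕ) - 1 : ℝ) ≤ 2 * m / (i + 1 : ℕ) := sub_le_self _ zero_le_one
      _ ≤ 2 * m := div_le_self (by positivity) (by simp)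

theorem lpNorm_iteratedDeriv_mul_iteratedDeriv_le {m i j : ℕ} (hij : i + j = m) (hab : a ≤ b)
    (hf : ContDiff ℝ m f) (hper : ∀ k < m, iteratedDeriv k f b = iteratedDeriv k f a) :
    lpNorm (iteratedDeriv i f * iteratedDeriv j f) 2 (volume.restrict (Set.Ioc a b)) ≤
      (2 * m) ^ (i * j) * (lpNorm f ∞ (volume.restrict (Set.Ioc a b)) *
        lpNorm (iteratedDeriv m f) 2 (volume.restrict (Set.Ioc a b))) := by
  set μ : Measure ℝ := volume.restrict (Set.Ioc a b)
  have hmem {k : ℕ} (hk : k ≤ m) (p : ℝ≥0∞) : MemLp (iteratedDeriv k f) p μ :=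
    memLp_restrict_Ioc_of_continuous (hf.continuous_iteratedDeriv k (mod_cast hk)) a b p
  rcases m.eq_zero_or_pos with rfl | hm
  · obtain ⟨rfl, rfl⟩ : i = 0 ∧ j = 0 := by lia
    simpa using lpNorm_smul_le_mul_lpNorm (hmem le_rfl ∞) (hmem le_rfl 2)
  have h2m : (2 * m : ℝ≥0∞) ≠ 0 := mul_ne_zero two_ne_zero (Nat.cast_ne_zero.mpr (by lia))
  have h2 : (2 * m / m : ℝ≥0∞) = 2 :=
    ENNReal.mul_div_cancel_right (Nat.cast_ne_zero.mpr hm.ne') (by finiteness)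
  have hholder : ENNReal.HolderTriple (2 * m / i) (2 * m / j) 2 := by
    convert holderTriple_div_div h2m (by finiteness) i j
    rw [← Nat.cast_add, hij, h2]
  calc lpNorm (iteratedDeriv i f * iteratedDeriv j f) 2 μ
      ≤ lpNorm (iteratedDeriv i f) (2 * m / i) μ * lpNorm (iteratedDeriv j f) (2 * m / j) μ :=
        lpNorm_smul_le_mul_lpNorm (hmem (by lia) _) (hmem (by lia) _)
    _ ≤ (2 * m) ^ (i * j) * (lpNorm (iteratedDeriv 0 f) (2 * m / (0 : ℕ)) μ *
          lpNorm (iteratedDeriv (i + j) f) (2 * m / (i + j : ℕ)) μ) :=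
        mul_le_pow_mul_zero_mul_of_sq_le (a := fun k => lpNorm (iteratedDeriv k f) (2 * m / k) μ)
          (by positivity) (fun _ => lpNorm_nonneg)
          (fun k hk => lpNorm_iteratedDeriv_succ_sq_le hk hab hf hper) hij.le
    _ = (2 * m) ^ (i * j) * (lpNorm f ∞ μ * lpNorm (iteratedDeriv m f) 2 μ) := by
        rw [hij, h2, Nat.cast_zero, ENNReal.div_zero h2m, iteratedDeriv_zero]

end Interpolation

theorem mul_iteratedDeriv_sub_iteratedDeriv_mul {𝕜 A : Type*} [NontriviallyNormedField 𝕜]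
    [NormedCommRing A] [NormedAlgebra 𝕜 A] {n : ℕ} {f g : 𝕜 → A} {x : 𝕜}
    (hf : ContDiffAt 𝕜 n f x) (hg : ContDiffAt 𝕜 n g x) :
    f x * iteratedDeriv n g x - iteratedDeriv n (f * g) x =
      -∑ j ∈ Finset.range n,
        n.choose (j + 1) * iteratedDeriv (j + 1) f x * iteratedDeriv (n - (j + 1)) g x := by
  rw [iteratedDeriv_mul hf hg, Finset.sum_range_succ']
  simp

theorem periodic_iteratedDeriv {𝕜 F : Type*} [NontriviallyNormedField 𝕜] [NormedAddCommGroup F]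
    [NormedSpace 𝕜 F] {f : 𝕜 → F} {c : 𝕜} (hf : Function.Periodic f c) (n : ℕ) :
    Function.Periodic (iteratedDeriv n f) c := fun x => by
  rw [← congrFun (iteratedDeriv_comp_add_const n f c) x, funext hf]

/-- The constant `C(ℓ)` of the commutator estimate: the `j`-th summand bounds the Leibniz term
`∂ʲ⁺¹u · ∂^{ℓ-j}u`, a product of derivatives of `∂u` of total order `ℓ - 1`. The subtractions are
never truncated, since `j < ℓ`. -/
def commutatorConst (ℓ : ℕ) : ℝ :=
  ∑ j ∈ Finset.range ℓ, ℓ.choose (j + 1) * (2 * (ℓ - 1 : ℕ) : ℝ) ^ (j * (ℓ - 1 - j))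

theorem commutatorConst_nonneg (ℓ : ℕ) : 0 ≤ commutatorConst ℓ :=
  Finset.sum_nonneg fun _ _ => by positivity

theorem commutatorConst_pos {ℓ : ℕ} (hℓ : 1 ≤ ℓ) : 0 < commutatorConst ℓ := by
  refine Finset.sum_pos' (fun j _ => by positivity) ⟨0, Finset.mem_range.mpr hℓ, ?_⟩
  simpa using Nat.pos_of_ne_zero (by lia)

theorem lpNorm_mul_iteratedDeriv_sub_le {ℓ : ℕ} {T : ℝ} {u : ℝ → ℝ} (hT : 0 ≤ T)
    (hu : ContDiff ℝ (ℓ + 1) u) (hper : Function.Periodic u T) :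
    lpNorm (fun x => u x * iteratedDeriv (ℓ + 1) u x - iteratedDeriv ℓ (u * deriv u) x) 2
        (volume.restrict (Set.Ioc 0 T)) ≤
      commutatorConst ℓ * (lpNorm (deriv u) ∞ (volume.restrict (Set.Ioc 0 T)) *
        lpNorm (iteratedDeriv ℓ u) 2 (volume.restrict (Set.Ioc 0 T))) := by
  set μ : Measure ℝ := volume.restrict (Set.Ioc 0 T)
  have hv : ContDiff ℝ ℓ (deriv u) := (contDiff_succ_iff_deriv.mp hu).2.2
  have hvper : Function.Periodic (deriv u) T := by
    simpa only [iteratedDeriv_one] using periodic_iteratedDeriv hper 1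
  have hkper (k : ℕ) : iteratedDeriv k (deriv u) T = iteratedDeriv k (deriv u) 0 := by
    simpa only [zero_add] using periodic_iteratedDeriv hvper k 0
  have hcont {k : ℕ} (hk : k ≤ ℓ) : Continuous (iteratedDeriv k (deriv u)) :=
    hv.continuous_iteratedDeriv k (mod_cast hk)
  have hleibniz : (fun x => u x * iteratedDeriv (ℓ + 1) u x - iteratedDeriv ℓ (u * deriv u) x) =
      -∑ j ∈ Finset.range ℓ, (ℓ.choose (j + 1) : ℝ) •
        (iteratedDeriv j (deriv u) * iteratedDeriv (ℓ - 1 - j) (deriv u)) := by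
    ext x
    rw [iteratedDeriv_succ', mul_iteratedDeriv_sub_iteratedDeriv_mul
      (hu.of_le (by simp)).contDiffAt hv.contDiffAt]
    simp [iteratedDeriv_succ', mul_assoc, Nat.sub_sub, add_comm]
  rw [hleibniz, lpNorm_neg, commutatorConst, Finset.sum_mul]
  refine (lpNorm_sum_le (fun j hj => ?_) one_le_two).trans (Finset.sum_le_sum fun j hj => ?_)
  · rw [Finset.mem_range] at hj
    exact (memLp_restrict_Ioc_of_continuous
      ((hcont (by lia)).mul (hcont (by lia))) 0 T 2).const_smul _
  · rw [Finset.mem_range] at hj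
    rw [lpNorm_const_smul, coe_nnnorm, Real.norm_natCast, mul_assoc]
    have htop : iteratedDeriv ℓ u = iteratedDeriv (ℓ - 1) (deriv u) := by
      rw [← iteratedDeriv_succ', Nat.sub_add_cancel (by lia)]
    rw [htop]
    gcongr
    exact lpNorm_iteratedDeriv_mul_iteratedDeriv_le (by lia) hT
      (hv.of_le (mod_cast Nat.sub_le ℓ 1)) fun k _ => hkper k

theorem stmt13_general {ℓ : ℕ} {T M : ℝ} {u : ℝ → ℝ} (hT : 0 ≤ T) (hu : ContDiff ℝ (ℓ + 1) u)
    (hper : Function.Periodic u T) (hM : ∀ x, |deriv u x| ≤ M) :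
    √(∫ x in 0..T, (u x * iteratedDeriv (ℓ + 1) u x
        - iteratedDeriv ℓ (fun y => u y * deriv u y) x) ^ 2)
      ≤ commutatorConst ℓ * M * √(∫ x in 0..T, (iteratedDeriv ℓ u x) ^ 2) := by
  have hu' : ContDiff ℝ ℓ u := hu.of_le (by simp)
  have hcomm : Continuous fun x =>
      u x * iteratedDeriv (ℓ + 1) u x - iteratedDeriv ℓ (u * deriv u) x :=
    (hu.continuous.mul (hu.continuous_iteratedDeriv (ℓ + 1) (by simp))).sub
      ((hu'.mul (contDiff_succ_iff_deriv.mp hu).2.2).continuous_iteratedDeriv ℓ le_rfl)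
  have hsup : lpNorm (deriv u) ∞ (volume.restrict (Set.Ioc 0 T)) ≤ M :=
    lpNorm_top_le_of_ae_bound ((abs_nonneg _).trans (hM 0)) (.of_forall hM)
  have hbound := lpNorm_mul_iteratedDeriv_sub_le hT hu hper
  rw [lpNorm_two_eq_sqrt_integral_sq hcomm.aestronglyMeasurable, lpNorm_two_eq_sqrt_integral_sq
    (hu'.continuous_iteratedDeriv ℓ le_rfl).aestronglyMeasurable] at hbound
  rw [intervalIntegral.integral_of_le hT, intervalIntegral.integral_of_le hT, mul_assoc]
  refine hbound.trans ?_
  have := commutatorConst_nonneg ℓ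
  gcongr

/-- On the circle `𝕊¹ = ℝ/ℤ`, for `ℓ ≥ 1` there is a constant `C(ℓ)` such that
`‖u ∂ₓ^{ℓ+1}u - ∂ₓ^ℓ(u ∂ₓu)‖_{L²} ≤ C(ℓ) ‖∂ₓu‖_{L^∞} ‖∂ₓ^ℓ u‖_{L²}`
for all (smooth, periodic) `u`. -/
theorem stmt13 (ℓ : ℕ) (hℓ : 1 ≤ ℓ) :
    ∃ C : ℝ, 0 < C ∧
      ∀ u : ℝ → ℝ, ContDiff ℝ (⊤ : ℕ∞) u → (∀ x, u (x + 1) = u x) →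
        ∀ M : ℝ, (∀ x, |deriv u x| ≤ M) →
          Real.sqrt (∫ x in (0:ℝ)..1,
              (u x * iteratedDeriv (ℓ + 1) u x
                - iteratedDeriv ℓ (fun y => u y * deriv u y) x) ^ 2)
            ≤ C * M * Real.sqrt (∫ x in (0:ℝ)..1, (iteratedDeriv ℓ u x) ^ 2) := by
  exact ⟨commutatorConst ℓ, commutatorConst_pos hℓ, fun u hu hper M hM =>
    stmt13_general zero_le_one (hu.of_le (mod_cast le_top)) hper hM⟩
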